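/- arXiv:1509.07235 — 2 statements merged into one kernel-verified Lean document; each statement's English description precedes it below -/
import Mathlib

section
/- For any ring R and R-module M with n ≥ 1, fd_R(M) ≤ n if and only if Ext^1_R(M,N)=0 for every L_n-injective R-module N. -/
open CategoryTheory

/-- Flatness of a module over an arbitrary (possibly noncommutative) ring,
via the equational criterion: every relation is a consequence of trivial relations. -/
def IsFlatMod (R : Type) [Ring R] (M : Type) [AddCommGroup M] [Module R M] : Prop :=
  ∀ (ι : Type) (_ : Fintype ι) (r : ι → R) (x : ι → M),
    (∑ i, r i • x i = 0) →
      ∃ (κ : Type) (_ : Fintype κ) (a : ι → κ → R) (y : κ → M),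
        (∀ i, x i = ∑ j, a i j • y j) ∧ ∀ j, (∑ i, r i * a i j) = 0

variable (R : Type) [Ring R]

/-- `Ext^n_R(M, N) = 0`. -/
def extVanish (n : ℕ) (M N : ModuleCat.{0} R) : Prop :=
  Subsingleton (((Ext ℤ (ModuleCat.{0} R) n).obj (Opposite.op M)).obj N)

/-- `M` has flat dimension at most `n`. -/
def fdLE : ℕ → ModuleCat.{0} R → Prop
  | 0, M => IsFlatMod R M
  | n+1, M => ∃ (K F : ModuleCat.{0} R) (f : K ⟶ F) (g : F ⟶ M),
      IsFlatMod R F ∧ Function.Injective f ∧ Function.Surjective g ∧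
        Function.Exact f g ∧ fdLE n K

/-- `W` is `L_n`-injective: `Ext^1_R(M, W) = 0` for every `M` of flat dimension at most `n`. -/
def LnInj (n : ℕ) (W : ModuleCat.{0} R) : Prop :=
  ∀ M : ModuleCat.{0} R, fdLE R n M → extVanish R 1 M W

section FlatModules

variable {R} {K G F : Type} [AddCommGroup K] [Module R K] [AddCommGroup G] [Module R G]
  [AddCommGroup F] [Module R F]

theorem IsFlatMod.of_free (M : Type) [AddCommGroup M] [Module R M] [Module.Free R M] :
    IsFlatMod R M := by
  classical
  intro ι _ r x hx
  let b := Module.Free.chooseBasis R M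
  let s : Finset (Module.Free.ChooseBasisIndex R M) :=
    Finset.univ.biUnion fun i ↦ (b.repr (x i)).support
  refine ⟨s, inferInstance, fun i j ↦ b.repr (x i) j, fun j ↦ b j, fun i ↦ ?_, fun j ↦ ?_⟩
  · conv_lhs => rw [← b.linearCombination_repr (x i), Finsupp.linearCombination_apply]
    rw [Finset.sum_coe_sort s (fun j ↦ b.repr (x i) j • b j)]
    refine Finsupp.sum_of_support_subset _ ?_ _ (by simp)
    exact Finset.subset_biUnion_of_mem (fun i ↦ (b.repr (x i)).support) (Finset.mem_univ i)
  · simpa [Finsupp.finsetSum_apply] using DFunLike.congr_fun (congrArg b.repr hx) j.1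

/-- The equational criterion for finitely many simultaneous relations. -/
theorem IsFlatMod.exists_of_fin (hF : IsFlatMod R F) (m : ℕ) (ι : Type) [Fintype ι]
    (r : Fin m → ι → R) (x : ι → F) (h : ∀ l, ∑ i, r l i • x i = 0) :
    ∃ (κ : Type) (_ : Fintype κ) (a : ι → κ → R) (y : κ → F),
      (∀ i, x i = ∑ j, a i j • y j) ∧ ∀ l j, ∑ i, r l i * a i j = 0 := by
  classical
  induction m generalizing ι with
  | zero =>
    refine ⟨ι, inferInstance, fun i j ↦ if i = j then 1 else 0, x, fun i ↦ ?_, fun l ↦ l.elim0⟩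
    simp
  | succ m ih =>
    obtain ⟨κ, _, a, y, hxy, ha⟩ := hF ι inferInstance (r 0) x (h 0)
    obtain ⟨μ, _, b, z, hyz, hb⟩ := ih κ (fun l j ↦ ∑ i, r l.succ i * a i j) y fun l ↦ by
      simp_rw [Finset.sum_smul, mul_smul]
      rw [Finset.sum_comm, ← h l.succ]
      simp_rw [← Finset.smul_sum, ← hxy]
    refine ⟨μ, inferInstance, fun i k ↦ ∑ j, a i j * b j k, z, fun i ↦ ?_, fun l k ↦ ?_⟩
    · simp_rw [Finset.sum_smul, mul_smul]
      rw [Finset.sum_comm]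
      simp_rw [← Finset.smul_sum, ← hyz, ← hxy]
    · have key (l) : ∑ i, r l i * ∑ j, a i j * b j k = ∑ j, (∑ i, r l i * a i j) * b j k := by
        simp_rw [Finset.mul_sum, Finset.sum_mul, mul_assoc]
        exact Finset.sum_comm
      rw [key]
      cases l using Fin.cases with
      | zero => simp [ha]
      | succ l => exact hb l k

theorem IsFlatMod.exists_of_fintype (hF : IsFlatMod R F) (m ι : Type) [Fintype m] [Fintype ι]
    (r : m → ι → R) (x : ι → F) (h : ∀ l, ∑ i, r l i • x i = 0) :
    ∃ (κ : Type) (_ : Fintype κ) (a : ι → κ → R) (y : κ → F),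
      (∀ i, x i = ∑ j, a i j • y j) ∧ ∀ l j, ∑ i, r l i * a i j = 0 := by
  let e := Fintype.equivFin m
  obtain ⟨κ, _, a, y, hx, ha⟩ := hF.exists_of_fin _ ι (fun l ↦ r (e.symm l)) x fun l ↦ h _
  exact ⟨κ, _, a, y, hx, fun l j ↦ by simpa using ha (e l) j⟩

variable {f : K →ₗ[R] G} {g : G →ₗ[R] F}

/-- The kernel of a surjection between flat modules is flat. -/
theorem IsFlatMod.of_exact (hG : IsFlatMod R G) (hF : IsFlatMod R F)
    (hf : Function.Injective f) (hfg : Function.Exact f g) (hg : Function.Surjective g) :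
    IsFlatMod R K := by
  intro ι _ r x hx
  obtain ⟨κ, _, a, y, hxy, ha⟩ := hG ι inferInstance r (fun i ↦ f (x i)) (by
    simpa using congrArg f hx)
  obtain ⟨μ, _, b, z, hyz, hb⟩ := hF.exists_of_fintype ι κ a (fun j ↦ g (y j)) fun i ↦ by
    simpa [hfg.apply_apply_eq_zero] using (congrArg g (hxy i)).symm
  choose w hw using fun k ↦ hg (z k)
  have hmem (j) : ∃ u, f u = y j - ∑ k, b j k • w k :=
    (hfg _).1 (by simp [hw, ← hyz])
  choose u hu using hmem
  refine ⟨κ, inferInstance, a, u, fun i ↦ hf ?_, ha⟩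
  have hzero : ∑ j, a i j • ∑ k, b j k • w k = 0 := by
    simp_rw [Finset.smul_sum, ← mul_smul]
    rw [Finset.sum_comm]
    simp_rw [← Finset.sum_smul, hb, zero_smul, Finset.sum_const_zero]
  simp [hu, smul_sub, Finset.sum_sub_distrib, hzero, hxy]

/-- The additive map `x ↦ ∑ i, r i • x i`. -/
def smulSum {ι : Type} [Fintype ι] (r : ι → R) (M : Type) [AddCommGroup M] [Module R M] :
    (ι → M) →+ M where
  toFun x := ∑ i, r i • x i
  map_zero' := by simp
  map_add' x y := by simp [smul_add, Finset.sum_add_distrib]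

theorem smul_mem_range_smulSum {ι : Type} [Fintype ι] (r : ι → R) (i : ι) (x : K) :
    r i • x ∈ (smulSum r K).range := by
  classical
  refine ⟨Pi.single i x, ?_⟩
  simp only [smulSum, AddMonoidHom.coe_mk, ZeroHom.coe_mk]
  rw [Finset.sum_eq_single i (fun j _ hj ↦ by simp [hj]) (by simp), Pi.single_eq_same]

/-- Relative purity of a submodule with flat quotient. -/
theorem IsFlatMod.mem_range_smulSum (hF : IsFlatMod R F) (hf : Function.Injective f)
    (hfg : Function.Exact f g) (hg : Function.Surjective g) {ι : Type} [Fintype ι] (r : ι → R)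
    (k : K) (hk : f k ∈ (smulSum r G).range) : k ∈ (smulSum r K).range := by
  obtain ⟨x, hx⟩ := hk
  replace hx : ∑ i, r i • x i = f k := hx
  obtain ⟨κ, _, a, y, hxy, ha⟩ := hF ι inferInstance r (fun i ↦ g (x i)) (by
    simpa [hfg.apply_apply_eq_zero] using congrArg g hx)
  choose w hw using fun k ↦ hg (y k)
  have hmem (i) : ∃ u, f u = x i - ∑ j, a i j • w j :=
    (hfg _).1 (by simp [hw, ← hxy])
  choose u hu using hmem
  refine ⟨u, hf ?_⟩
  have hzero : ∑ i, r i • ∑ j, a i j • w j = 0 := by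
    simp_rw [Finset.smul_sum, ← mul_smul]
    rw [Finset.sum_comm]
    simp_rw [← Finset.sum_smul, ha, zero_smul, Finset.sum_const_zero]
  simp [smulSum, hu, smul_sub, Finset.sum_sub_distrib, hzero, hx]

/-- The characters of `R` vanishing on the right ideal generated by the family `r`, that is,
the character module of the corresponding cyclic right module. -/
def vanishingChar {ι : Type} (r : ι → R) : AddSubgroup (R →+ AddCircle (1 : ℚ)) where
  carrier := {χ | ∀ i s, χ (r i * s) = 0}
  zero_mem' := by simp
  add_mem' hχ hψ i s := by simp [hχ i s, hψ i s]
  neg_mem' hχ i s := by simp [hχ i s]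

instance {ι : Type} (r : ι → R) : SMul R (vanishingChar r) where
  smul t χ := ⟨χ.1.comp (AddMonoidHom.mulRight t), fun i s ↦ by
    simpa [mul_assoc] using χ.2 i (s * t)⟩

theorem vanishingChar_smul_apply {ι : Type} (r : ι → R) (t : R) (χ : vanishingChar r) (s : R) :
    (t • χ).1 s = χ.1 (s * t) := rfl

instance {ι : Type} (r : ι → R) : Module R (vanishingChar r) where
  one_smul χ := by ext; simp [vanishingChar_smul_apply]
  mul_smul s t χ := by ext; simp [vanishingChar_smul_apply, mul_assoc]
  smul_zero t := by ext; simp [vanishingChar_smul_apply]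
  smul_add t χ ψ := by ext; simp [vanishingChar_smul_apply]
  add_smul s t χ := by ext; simp [vanishingChar_smul_apply, mul_add]
  zero_smul χ := by ext; simp [vanishingChar_smul_apply]

/-- The linear map into `vanishingChar r` induced by a character killing all `r i • x`. -/
def toVanishingChar {ι : Type} (r : ι → R) (φ : K →+ AddCircle (1 : ℚ))
    (hφ : ∀ i x, φ (r i • x) = 0) : K →ₗ[R] vanishingChar r where
  toFun x := ⟨φ.comp (AddMonoidHom.flip (smulAddHom R K) x), fun i s ↦ by
    simpa [mul_smul] using hφ i (s • x)⟩
  map_add' x y := by ext; simp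
  map_smul' t x := by ext; simp [vanishingChar_smul_apply, mul_smul]

theorem toVanishingChar_apply {ι : Type} (r : ι → R) (φ : K →+ AddCircle (1 : ℚ))
    (hφ : ∀ i x, φ (r i • x) = 0) (x : K) (s : R) :
    (toVanishingChar r φ hφ x).1 s = φ (s • x) := rfl

theorem vanishingChar_apply_smul_one {ι : Type} (r : ι → R) (h : K →ₗ[R] vanishingChar r)
    (i : ι) (x : K) : (h (r i • x)).1 1 = 0 := by
  simpa [vanishingChar_smul_apply] using (h x).2 i 1

theorem IsFlatMod.exists_extension (hF : IsFlatMod R F) (hf : Function.Injective f)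
    (hfg : Function.Exact f g) (hg : Function.Surjective g) {ι : Type} [Fintype ι] (r : ι → R)
    (h : K →ₗ[R] vanishingChar r) : ∃ h' : G →ₗ[R] vanishingChar r, h' ∘ₗ f = h := by
  let φ : K →+ AddCircle (1 : ℚ) :=
    { toFun x := (h x).1 1
      map_zero' := by simp
      map_add' x y := by simp }
  have hφ : (smulSum r K).range ≤ φ.ker := by
    rintro _ ⟨x, rfl⟩
    have hx (i : ι) : φ (r i • x i) = 0 := vanishingChar_apply_smul_one r h i (x i)
    simp [smulSum, AddMonoidHom.mem_ker, hx]
  have hle : (smulSum r K).range ≤ (smulSum r G).range.comap f.toAddMonoidHom := by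
    rintro _ ⟨x, rfl⟩
    exact ⟨fun i ↦ f (x i), by simp [smulSum]⟩
  let j := QuotientAddGroup.map (smulSum r K).range (smulSum r G).range f.toAddMonoidHom hle
  have hj : Function.Injective j := by
    rw [injective_iff_map_eq_zero]
    intro x
    induction x using QuotientAddGroup.induction_on with
    | H x =>
      intro hx
      rw [QuotientAddGroup.eq_zero_iff]
      exact hF.mem_range_smulSum hf hfg hg r x ((QuotientAddGroup.eq_zero_iff _).1 hx)
  obtain ⟨ψ, hψ⟩ := CharacterModule.dual_surjective_of_injective j.toIntLinearMap hj
    (QuotientAddGroup.lift _ φ hφ)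
  let ψ' : G →+ AddCircle (1 : ℚ) := AddMonoidHom.comp ψ (QuotientAddGroup.mk' _)
  refine ⟨toVanishingChar r ψ' fun i x ↦ ?_, ?_⟩
  · have : (QuotientAddGroup.mk' (smulSum r G).range) (r i • x) = 0 :=
      (QuotientAddGroup.eq_zero_iff _).2 (smul_mem_range_smulSum r i x)
    exact (congrArg ψ this).trans (map_zero ψ)
  · ext x s
    have : ψ' (f (s • x)) = φ (s • x) := DFunLike.congr_fun hψ (QuotientAddGroup.mk (s • x))
    rw [LinearMap.comp_apply, toVanishingChar_apply, ← map_smul, this]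
    simp [φ, vanishingChar_smul_apply]

theorem IsFlatMod.of_exists_extension (hG : IsFlatMod R G) (hfg : Function.Exact f g)
    (hg : Function.Surjective g)
    (hext : ∀ (ι : Type) [Fintype ι] (r : ι → R) (h : K →ₗ[R] vanishingChar r),
      ∃ h' : G →ₗ[R] vanishingChar r, h' ∘ₗ f = h) : IsFlatMod R F := by
  intro ι _ r x hx
  choose w hw using fun i ↦ hg (x i)
  obtain ⟨k, hk⟩ := (hfg (∑ i, r i • w i)).1 (by simp [hw, hx])
  have hkmem : k ∈ (smulSum r K).range := by
    by_contra hkn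
    obtain ⟨χ, hχ⟩ := CharacterModule.exists_character_apply_ne_zero_of_ne_zero
      (a := (QuotientAddGroup.mk k : K ⧸ (smulSum r K).range))
      (by rwa [Ne, QuotientAddGroup.eq_zero_iff])
    let φ : K →+ AddCircle (1 : ℚ) := AddMonoidHom.comp χ (QuotientAddGroup.mk' _)
    obtain ⟨h', hh'⟩ := hext ι r (toVanishingChar r φ fun i x ↦ by
      have : (QuotientAddGroup.mk' (smulSum r K).range) (r i • x) = 0 :=
        (QuotientAddGroup.eq_zero_iff _).2 (smul_mem_range_smulSum r i x)
      exact (congrArg χ this).trans (map_zero χ))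
    apply hχ
    have h₁ : (h' (f k)).1 1 = φ k := by
      rw [← LinearMap.comp_apply, hh', toVanishingChar_apply, one_smul]
    have h₂ : (h' (f k)).1 1 = 0 := by
      rw [hk, map_sum, AddSubgroup.val_finsetSum, AddMonoidHom.finsetSum_apply]
      exact Finset.sum_eq_zero fun i _ ↦ vanishingChar_apply_smul_one r h' i (w i)
    exact h₁.symm.trans h₂
  obtain ⟨u, hu⟩ := hkmem
  replace hu : ∑ i, r i • u i = k := hu
  obtain ⟨κ, _, a, y, hay, ha⟩ := hG ι inferInstance r (fun i ↦ w i - f (u i)) (by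
    simp [smul_sub, Finset.sum_sub_distrib, ← hk, ← hu])
  refine ⟨κ, inferInstance, a, fun j ↦ g (y j), fun i ↦ ?_, ha⟩
  simpa [hw, hfg.apply_apply_eq_zero] using congrArg g (hay i)

end FlatModules

section ExtGroups

variable {C : Type 1} [Category.{0} C] [Abelian C] [HasExt.{0} C]

theorem subsingleton_ext_X₃ {S : ShortComplex C} (hS : S.ShortExact) {Y : C} {n : ℕ}
    (h₁ : Subsingleton (Abelian.Ext S.X₁ Y n)) (h₂ : Subsingleton (Abelian.Ext S.X₂ Y (n + 1))) :
    Subsingleton (Abelian.Ext S.X₃ Y (n + 1)) := by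
  refine subsingleton_of_forall_eq 0 fun x ↦ ?_
  obtain ⟨y, rfl⟩ := Abelian.Ext.contravariant_sequence_exact₃ hS Y x
    (Subsingleton.elim _ _) (add_comm 1 n)
  rw [Subsingleton.elim y 0, Abelian.Ext.comp_zero]

theorem subsingleton_ext_X₁ {S : ShortComplex C} (hS : S.ShortExact) {Y : C} {n : ℕ}
    (h₂ : Subsingleton (Abelian.Ext S.X₂ Y n)) (h₃ : Subsingleton (Abelian.Ext S.X₃ Y (n + 1))) :
    Subsingleton (Abelian.Ext S.X₁ Y n) := by
  refine subsingleton_of_forall_eq 0 fun x ↦ ?_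
  obtain ⟨y, rfl⟩ := Abelian.Ext.contravariant_sequence_exact₁ hS Y x (add_comm 1 n)
    (Subsingleton.elim _ _)
  rw [Subsingleton.elim y 0, Abelian.Ext.comp_zero]

theorem subsingleton_ext_cosyzygy_iff {S : ShortComplex C} (hS : S.ShortExact)
    [Injective S.X₂] (X : C) (n : ℕ) :
    Subsingleton (Abelian.Ext X S.X₃ (n + 1)) ↔ Subsingleton (Abelian.Ext X S.X₁ (n + 2)) := by
  constructor <;> intro h <;> refine subsingleton_of_forall_eq 0 fun x ↦ ?_
  · obtain ⟨y, rfl⟩ := Abelian.Ext.covariant_sequence_exact₁ X hS x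
      (Abelian.Ext.eq_zero_of_injective _) rfl
    rw [Subsingleton.elim y 0, Abelian.Ext.zero_comp]
  · obtain ⟨y, rfl⟩ := Abelian.Ext.covariant_sequence_exact₃ X hS x (n₁ := n + 2) rfl
      (Subsingleton.elim _ _)
    rw [Abelian.Ext.eq_zero_of_injective y, Abelian.Ext.zero_comp]

/-- Iterated dimension shifting in the second variable. -/
theorem exists_cosyzygy [EnoughInjectives C] (n : ℕ) (Y : C) :
    ∃ N : C, ∀ X : C, Subsingleton (Abelian.Ext X N 1) ↔
      Subsingleton (Abelian.Ext X Y (n + 1)) := by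
  induction n generalizing Y with
  | zero => exact ⟨Y, fun X ↦ Iff.rfl⟩
  | succ n ih =>
    let S := ShortComplex.mk (Injective.ι Y) (Limits.cokernel.π (Injective.ι Y)) (by simp)
    have hS : S.ShortExact :=
      { exact := ShortComplex.exact_of_g_is_cokernel _ (Limits.cokernelIsCokernel _)
        mono_f := inferInstanceAs (Mono (Injective.ι Y))
        epi_g := inferInstanceAs (Epi (Limits.cokernel.π (Injective.ι Y))) }
    have : Injective S.X₂ := inferInstanceAs (Injective (Injective.under Y))
    obtain ⟨N, hN⟩ := ih S.X₃
    exact ⟨N, fun X ↦ (hN X).trans (subsingleton_ext_cosyzygy_iff hS X n)⟩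

theorem exists_extension_of_subsingleton_ext {S : ShortComplex C} (hS : S.ShortExact) {Y : C}
    (h : Subsingleton (Abelian.Ext S.X₃ Y 1)) (f : S.X₁ ⟶ Y) : ∃ g : S.X₂ ⟶ Y, S.f ≫ g = f := by
  obtain ⟨y, hy⟩ := Abelian.Ext.contravariant_sequence_exact₁ hS Y (Abelian.Ext.mk₀ f)
    (add_zero 1) (Subsingleton.elim _ _)
  obtain ⟨g, rfl⟩ := (Abelian.Ext.mk₀_bijective _ _).surjective y
  refine ⟨g, (Abelian.Ext.mk₀_bijective _ _).injective ?_⟩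
  rw [← hy, Abelian.Ext.mk₀_comp_mk₀]

theorem subsingleton_ext_of_exists_extension {S : ShortComplex C} (hS : S.ShortExact) {Y : C}
    (h₂ : Subsingleton (Abelian.Ext S.X₂ Y 1))
    (h : ∀ f : S.X₁ ⟶ Y, ∃ g : S.X₂ ⟶ Y, S.f ≫ g = f) :
    Subsingleton (Abelian.Ext S.X₃ Y 1) := by
  refine subsingleton_of_forall_eq 0 fun x ↦ ?_
  obtain ⟨y, rfl⟩ := Abelian.Ext.contravariant_sequence_exact₃ hS Y x
    (Subsingleton.elim _ _) (add_zero 1)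
  obtain ⟨f, rfl⟩ := (Abelian.Ext.mk₀_bijective _ _).surjective y
  obtain ⟨g, rfl⟩ := h f
  rw [← Abelian.Ext.mk₀_comp_mk₀,
    ← Abelian.Ext.comp_assoc _ _ _ (add_zero 1) (zero_add 0) (by simp)]
  simp

end ExtGroups

variable {R} in
theorem extVanish_one_iff (M N : ModuleCat.{0} R) :
    extVanish R 1 M N ↔ Subsingleton (Abelian.Ext M N 1) := by
  let P := projectiveResolution M
  let T := ShortComplex.mk _ _ P.complex_d_comp_π_f_zero
  have hT : T.Exact := P.exact₀
  let S := ShortComplex.mk (Limits.kernel.ι (P.π.f 0)) (P.π.f 0)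
    (Limits.kernel.condition _)
  have hS : S.ShortExact :=
    { exact := ShortComplex.exact_of_f_is_kernel _ (Limits.kernelIsKernel _)
      mono_f := inferInstanceAs (Mono (Limits.kernel.ι (P.π.f 0)))
      epi_g := inferInstanceAs (Epi (P.π.f 0)) }
  have hS₂ : Subsingleton (Abelian.Ext S.X₂ N 1) :=
    have : Projective S.X₂ := P.projective 0
    Abelian.Ext.subsingleton_of_projective _ _ 0
  let p : P.complex.X 1 ⟶ Limits.kernel (P.π.f 0) :=
    Limits.kernel.lift _ (P.complex.d 1 0) P.complex_d_comp_π_f_zero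
  have hp : p ≫ Limits.kernel.ι (P.π.f 0) = P.complex.d 1 0 := Limits.kernel.lift_ι _ _ _
  have : Epi p := hT.epi_kernelLift
  have hdp : P.complex.d 2 1 ≫ p = 0 := by
    rw [← cancel_mono (Limits.kernel.ι (P.π.f 0)), Category.assoc, hp,
      Limits.zero_comp, P.complex.d_comp_d]
  have hU : (ShortComplex.mk _ _ hdp).Exact := by
    let φ : ShortComplex.mk _ _ hdp ⟶ ShortComplex.mk _ _ (P.complex.d_comp_d 2 1 0) :=
      { τ₁ := 𝟙 _, τ₂ := 𝟙 _, τ₃ := Limits.kernel.ι (P.π.f 0)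
        comm₂₃ := (Category.id_comp _).trans hp.symm }
    have : Epi φ.τ₁ := inferInstanceAs (Epi (𝟙 _))
    have : IsIso φ.τ₂ := inferInstanceAs (IsIso (𝟙 _))
    have : Mono φ.τ₃ := inferInstanceAs (Mono (Limits.kernel.ι (P.π.f 0)))
    exact (ShortComplex.exact_iff_of_epi_of_isIso_of_mono φ).2 (P.exact_succ 0)
  trans ∀ f : P.complex.X 1 ⟶ N, P.complex.d 2 1 ≫ f = 0 →
      ∃ g : P.complex.X 0 ⟶ N, P.complex.d 1 0 ≫ g = f
  · rw [extVanish, ← ModuleCat.isZero_iff_subsingleton, (P.isoExt 1 N).isZero_iff,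
      ← HomologicalComplex.exactAt_iff_isZero_homology,
      HomologicalComplex.exactAt_iff' _ 0 1 2 (by simp) (by simp),
      ShortComplex.moduleCat_exact_iff]
    rfl
  constructor
  · intro h
    refine subsingleton_ext_of_exists_extension hS hS₂ fun f ↦ ?_
    obtain ⟨g, hg⟩ := h (p ≫ f) (by rw [← Category.assoc, hdp, Limits.zero_comp])
    refine ⟨g, ?_⟩
    rw [← cancel_epi p, ← hg, ← Category.assoc]
    exact congrArg (· ≫ g) hp
  · intro h f hf
    obtain ⟨g, hg⟩ := exists_extension_of_subsingleton_ext hS h (hU.desc f hf)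
    refine ⟨g, ?_⟩
    rw [← hp, Category.assoc]
    exact (congrArg (p ≫ ·) hg).trans (hU.g_desc f hf)

section FlatDimension

variable {R}

theorem IsFlatMod.subsingleton_ext {F : ModuleCat.{0} R} (hF : IsFlatMod R F)
    {ι : Type} [Fintype ι] (r : ι → R) (k : ℕ) :
    Subsingleton (Abelian.Ext F (ModuleCat.of R (vanishingChar r)) (k + 1)) := by
  induction k generalizing F with
  | zero =>
    have hS := F.shortExact_projectiveShortComplex
    refine subsingleton_ext_of_exists_extension hS
      (Abelian.Ext.subsingleton_of_projective _ _ 0) fun h ↦ ?_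
    obtain ⟨h', hh'⟩ := hF.exists_extension hS.moduleCat_injective_f
      ((ShortComplex.ShortExact.moduleCat_exact_iff_function_exact _).1 hS.exact)
      hS.moduleCat_surjective_g r h.hom
    exact ⟨ModuleCat.ofHom h', ModuleCat.hom_ext hh'⟩
  | succ k ih =>
    have hS := F.shortExact_projectiveShortComplex
    refine subsingleton_ext_X₃ hS (ih ?_) (Abelian.Ext.subsingleton_of_projective _ _ _)
    exact (IsFlatMod.of_free (R := R) F.projectiveShortComplex.X₂).of_exact hF
      hS.moduleCat_injective_f
      ((ShortComplex.ShortExact.moduleCat_exact_iff_function_exact _).1 hS.exact)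
      hS.moduleCat_surjective_g

theorem fdLE.subsingleton_ext {n : ℕ} {M : ModuleCat.{0} R} (hM : fdLE R n M)
    {ι : Type} [Fintype ι] (r : ι → R) :
    Subsingleton (Abelian.Ext M (ModuleCat.of R (vanishingChar r)) (n + 1)) := by
  induction n generalizing M with
  | zero => exact IsFlatMod.subsingleton_ext hM r 0
  | succ n ih =>
    obtain ⟨K, F, f, g, hF, hf, hg, hfg, hK⟩ := hM
    let S := ShortComplex.mk f g (ModuleCat.hom_ext (LinearMap.ext hfg.apply_apply_eq_zero))
    have hS : S.ShortExact :=
      { exact := (ShortComplex.ShortExact.moduleCat_exact_iff_function_exact _).2 hfg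
        mono_f := (ModuleCat.mono_iff_injective f).2 hf
        epi_g := (ModuleCat.epi_iff_surjective g).2 hg }
    exact subsingleton_ext_X₃ hS (ih hK) (hF.subsingleton_ext r (n + 1))

theorem fdLE_of_subsingleton_ext {n : ℕ} {M : ModuleCat.{0} R}
    (h : ∀ (ι : Type) [Fintype ι] (r : ι → R),
      Subsingleton (Abelian.Ext M (ModuleCat.of R (vanishingChar r)) (n + 1))) :
    fdLE R n M := by
  induction n generalizing M with
  | zero =>
    have hS := M.shortExact_projectiveShortComplex
    refine (IsFlatMod.of_free (R := R) M.projectiveShortComplex.X₂).of_exists_extension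
      ((ShortComplex.ShortExact.moduleCat_exact_iff_function_exact _).1 hS.exact)
      hS.moduleCat_surjective_g fun ι _ r u ↦ ?_
    obtain ⟨v, hv⟩ := exists_extension_of_subsingleton_ext hS (h ι r) (ModuleCat.ofHom u)
    exact ⟨v.hom, congrArg ModuleCat.Hom.hom hv⟩
  | succ n ih =>
    have hS := M.shortExact_projectiveShortComplex
    exact ⟨_, _, M.projectiveShortComplex.f, M.projectiveShortComplex.g, IsFlatMod.of_free _,
      hS.moduleCat_injective_f, hS.moduleCat_surjective_g,
      (ShortComplex.ShortExact.moduleCat_exact_iff_function_exact _).1 hS.exact,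
      ih fun ι _ r ↦ subsingleton_ext_X₁ hS (Abelian.Ext.subsingleton_of_projective _ _ n) (h ι r)⟩

end FlatDimension

/-- For `n ≥ 1`, `fd_R M ≤ n` iff `Ext^1_R(M, N) = 0` for every `L_n`-injective module `N`. -/
theorem stmt9 (n : ℕ) (hn : 1 ≤ n) (M : ModuleCat.{0} R) :
    fdLE R n M ↔ ∀ N : ModuleCat.{0} R, LnInj R n N → extVanish R 1 M N := by
  refine ⟨fun hM N hN ↦ hN M hM, fun h ↦ fdLE_of_subsingleton_ext fun ι _ r ↦ ?_⟩
  obtain ⟨N, hN⟩ := exists_cosyzygy n (ModuleCat.of R (vanishingChar r))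
  rw [← hN, ← extVanish_one_iff]
  refine h N fun L hL ↦ ?_
  rw [extVanish_one_iff, hN]
  exact hL.subsingleton_ext r
end

section
/- Every cotorsion R-module is L_n-injective for some (equivalently, every) n ≥ 1 if and only if l.FFD(R)=0, i.e. every R-module of finite flat dimension is flat. -/
open CategoryTheory

variable (R : Type) [Ring R]

/-- `C` is cotorsion: `Ext^1_R(F, C) = 0` for every flat module `F`. -/
def Cotorsion (C : ModuleCat.{0} R) : Prop :=
  ∀ F : ModuleCat.{0} R, IsFlatMod R F → extVanish R 1 F C

section Ext

variable {R}

theorem extVanish_one_iff_s12 {M : ModuleCat.{0} R} (P : ProjectiveResolution M)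
    (C : ModuleCat.{0} R) :
    extVanish R 1 M C ↔ ∀ f : P.complex.X 1 →ₗ[R] C, (∀ z, f (P.complex.d 2 1 z) = 0) →
      ∃ g : P.complex.X 0 →ₗ[R] C, ∀ z, g (P.complex.d 1 0 z) = f z := by
  have h1 : extVanish R 1 M C ↔ (P.complex.linearYonedaObj ℤ C).ExactAt 1 := by
    rw [HomologicalComplex.exactAt_iff_isZero_homology, ← (P.isoExt (R := ℤ) 1 C).isZero_iff,
      ModuleCat.isZero_iff_subsingleton]
    rfl
  have h2 : extVanish R 1 M C ↔ ∀ f : P.complex.X 1 ⟶ C, P.complex.d 2 1 ≫ f = 0 →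
      ∃ g : P.complex.X 0 ⟶ C, P.complex.d 1 0 ≫ g = f := by
    rw [h1, HomologicalComplex.exactAt_iff' _ 0 1 2 (by simp) (by simp),
      ShortComplex.moduleCat_exact_iff]
    exact Iff.rfl
  rw [h2]
  constructor
  · intro h f hf
    obtain ⟨g, hg⟩ := h (ModuleCat.ofHom f) (by ext z; exact hf z)
    exact ⟨g.hom, fun z => congrArg (fun k => k.hom z) hg⟩
  · intro h f hf
    obtain ⟨g, hg⟩ := h f.hom (fun z => congrArg (fun k => k.hom z) hf)
    exact ⟨ModuleCat.ofHom g, by ext z; exact hg z⟩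

theorem resolution_exact_one {M : ModuleCat.{0} R} (P : ProjectiveResolution M)
    {q : P.complex.X 1} (hq : P.complex.d 1 0 q = 0) : ∃ z, P.complex.d 2 1 z = q :=
  ((P.complex.sc' 2 1 0).moduleCat_exact_iff.1 (P.exact_succ 0)) q hq

theorem resolution_d_d {M : ModuleCat.{0} R} (P : ProjectiveResolution M)
    (z : P.complex.X 2) : P.complex.d 1 0 (P.complex.d 2 1 z) = 0 :=
  congrArg (fun k => k.hom z) (P.complex.d_comp_d 2 1 0)

/-- The first steps of a projective resolution of `M`, as a presentation by modules. -/
theorem exists_augmentation {M : ModuleCat.{0} R} (P : ProjectiveResolution M) :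
    ∃ π : P.complex.X 0 →ₗ[R] M, Function.Surjective π ∧
      Function.Exact (P.complex.d 1 0) π := by
  let π : P.complex.X 0 ⟶ M := P.π.f 0
  have hπ : Epi π := inferInstanceAs (Epi (P.π.f 0))
  have he := ShortComplex.moduleCat_exact_iff_range_eq_ker _ |>.1 P.exact₀
  exact ⟨π.hom, (ModuleCat.epi_iff_surjective π).1 hπ, LinearMap.exact_iff.2 he.symm⟩

end Ext

section Flat

variable {R}

theorem IsFlatMod.of_retract {A B : Type} [AddCommGroup A] [Module R A] [AddCommGroup B]
    [Module R B] (s : A →ₗ[R] B) (p : B →ₗ[R] A) (h : ∀ a, p (s a) = a) (hB : IsFlatMod R B) :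
    IsFlatMod R A := by
  intro ι _ r x hx
  obtain ⟨κ, hκ, a, y, hy, ha⟩ := hB ι ‹_› r (fun i => s (x i)) (by
    simp only [← map_smul, ← map_sum, hx, map_zero])
  refine ⟨κ, hκ, a, fun j => p (y j), fun i => ?_, ha⟩
  rw [← h (x i), hy i]
  simp only [map_sum, map_smul]

theorem IsFlatMod.of_subsingleton (A : Type) [AddCommGroup A] [Module R A] [Subsingleton A] :
    IsFlatMod R A := fun _ _ _ _ _ =>
  ⟨PEmpty, inferInstance, fun _ => PEmpty.elim, PEmpty.elim, fun _ => Subsingleton.elim _ _,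
    fun j => j.elim⟩

theorem IsFlatMod.finsupp (X : Type) : IsFlatMod R (X →₀ R) := by
  classical
  intro ι _ r x hx
  refine ⟨(Finset.univ.biUnion fun i => (x i).support : Finset X), inferInstance,
    fun i j => x i j, fun j => Finsupp.single (j : X) 1, fun i => ?_, fun j => ?_⟩
  · rw [Finset.sum_coe_sort (Finset.univ.biUnion fun i => (x i).support)
      (fun j => x i j • Finsupp.single j (1 : R))]
    simp only [Finsupp.smul_single, smul_eq_mul, mul_one]
    conv_lhs => rw [← Finsupp.sum_single (x i)]
    exact Finsupp.sum_of_support_subset _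
      (Finset.subset_biUnion_of_mem (fun i => (x i).support) (Finset.mem_univ i)) _ (by simp)
  · simpa using DFunLike.congr_fun hx (j : X)

theorem IsFlatMod.of_projective (A : Type) [AddCommGroup A] [Module R A] [Module.Projective R A] :
    IsFlatMod R A := by
  obtain ⟨s, hs⟩ := Module.projective_def'.1 ‹Module.Projective R A›
  exact .of_retract s (Finsupp.linearCombination R id) (LinearMap.congr_fun hs) (.finsupp A)

theorem fdLE_succ {k : ℕ} {M : ModuleCat.{0} R} (h : fdLE R k M) : fdLE R (k + 1) M := by
  induction k generalizing M with
  | zero =>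
    refine ⟨ModuleCat.of R PUnit, M, 0, 𝟙 M, h, Function.injective_of_subsingleton _,
      Function.surjective_id, fun x => ?_, IsFlatMod.of_subsingleton _⟩
    exact ⟨fun hx => ⟨0, (map_zero _).trans hx.symm⟩, fun ⟨_, hy⟩ => hy.symm⟩
  | succ k ih =>
    obtain ⟨K, F, f, g, hF, hf, hg, hfg, hK⟩ := h
    exact ⟨K, F, f, g, hF, hf, hg, hfg, ih hK⟩

theorem fdLE_mono {k l : ℕ} (hkl : k ≤ l) {M : ModuleCat.{0} R} (h : fdLE R k M) :
    fdLE R l M := by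
  induction l, hkl using Nat.le_induction with
  | base => exact h
  | succ l _ ih => exact fdLE_succ ih

theorem isFlatMod_of_fdLE (h : ∀ M : ModuleCat.{0} R, fdLE R 1 M → IsFlatMod R M) (k : ℕ)
    (M : ModuleCat.{0} R) (hM : fdLE R k M) : IsFlatMod R M := by
  induction k generalizing M with
  | zero => exact hM
  | succ k ih =>
    obtain ⟨K, F, f, g, hF, hf, hg, hfg, hK⟩ := hM
    exact h M ⟨K, F, f, g, hF, hf, hg, hfg, ih K hK⟩

end Flat

section Character

/-- Additive maps into `ℚ/ℤ` factor through any additive map with smaller kernel. -/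
theorem exists_character_factor {A B : Type} [AddCommGroup A] [AddCommGroup B] (α : A →+ B)
    (ψ : A →+ AddCircle (1 : ℚ)) (h : α.ker ≤ ψ.ker) :
    ∃ χ : B →+ AddCircle (1 : ℚ), ∀ a, χ (α a) = ψ a := by
  obtain ⟨χ, hχ⟩ := (Module.Baer.of_divisible (AddCircle (1 : ℚ))).extension_property_addMonoidHom
    (QuotientAddGroup.kerLift α) (QuotientAddGroup.kerLift_injective α)
    (QuotientAddGroup.lift _ ψ h)
  exact ⟨χ, fun a => DFunLike.congr_fun hχ (a : A ⧸ α.ker)⟩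

variable {R} {ι : Type}

/-- The character module `Hom_ℤ(R / ∑ rᵢR, ℚ/ℤ)`. -/
def annChar (r : ι → R) : AddSubgroup (R →+ AddCircle (1 : ℚ)) where
  carrier := {φ | ∀ i t, φ (r i * t) = 0}
  zero_mem' _ _ := rfl
  add_mem' ha hb i t := by simp [ha i t, hb i t]
  neg_mem' ha i t := by simp [ha i t]

instance (r : ι → R) : SMul R (annChar r) where
  smul s φ := ⟨φ.1.comp (AddMonoidHom.mulRight s), fun i t => by
    simpa [mul_assoc] using φ.2 i (t * s)⟩

theorem annChar_smul_apply (r : ι → R) (s t : R) (φ : annChar r) :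
    (s • φ).1 t = φ.1 (t * s) := rfl

instance (r : ι → R) : Module R (annChar r) where
  one_smul φ := by ext t; simp [annChar_smul_apply]
  mul_smul s s' φ := by ext t; simp [annChar_smul_apply, mul_assoc]
  smul_zero s := rfl
  smul_add s φ φ' := rfl
  add_smul s s' φ := by ext t; simp [annChar_smul_apply, mul_add]
  zero_smul φ := by ext t; simp [annChar_smul_apply]

/-- A character of `A` killing every `rᵢ • a` induces a linear map from `A` to `annChar r`. -/
def annCharLift (r : ι → R) {A : Type} [AddCommGroup A] [Module R A]
    (ψ : A →+ AddCircle (1 : ℚ)) (h : ∀ i a, ψ (r i • a) = 0) : A →ₗ[R] annChar r where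
  toFun a := ⟨ψ.comp ((smulAddHom R A).flip a), fun i t => by simp [mul_smul, h]⟩
  map_add' a b := by ext t; simp
  map_smul' s a := by ext t; simp [annChar_smul_apply, mul_smul]

theorem annCharLift_apply (r : ι → R) {A : Type} [AddCommGroup A] [Module R A]
    (ψ : A →+ AddCircle (1 : ℚ)) (h : ∀ i a, ψ (r i • a) = 0) (a : A) (t : R) :
    (annCharLift r ψ h a).1 t = ψ (t • a) := rfl

/-- Evaluation at `1` turns linear maps to `annChar r` into characters. -/
def annCharEval (r : ι → R) {A : Type} [AddCommGroup A] [Module R A]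
    (f : A →ₗ[R] annChar r) : A →+ AddCircle (1 : ℚ) where
  toFun a := (f a).1 1
  map_zero' := by simp
  map_add' a b := by simp

theorem annCharEval_smul (r : ι → R) {A : Type} [AddCommGroup A] [Module R A]
    (f : A →ₗ[R] annChar r) (i : ι) (a : A) : annCharEval r f (r i • a) = 0 := by
  have := (f a).2 i 1
  simpa [annCharEval, annChar_smul_apply] using this

/-- The additive map `(xᵢ) ↦ ∑ rᵢ • xᵢ`. -/
def rowMap [Fintype ι] (r : ι → R) (A : Type) [AddCommGroup A] [Module R A] : (ι → A) →+ A where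
  toFun x := ∑ i, r i • x i
  map_zero' := by simp
  map_add' x y := by simp [Finset.sum_add_distrib]

theorem rowMap_apply [Fintype ι] (r : ι → R) {A : Type} [AddCommGroup A] [Module R A]
    (x : ι → A) : rowMap r A x = ∑ i, r i • x i := rfl

theorem smul_mem_range_rowMap [Fintype ι] (r : ι → R) {A : Type} [AddCommGroup A] [Module R A]
    (i : ι) (a : A) : r i • a ∈ (rowMap r A).range := by
  classical
  refine ⟨Pi.single i a, ?_⟩
  rw [rowMap_apply, Finset.sum_eq_single i] <;> simp +contextual

theorem map_rowMap [Fintype ι] (r : ι → R) {A B : Type} [AddCommGroup A] [Module R A]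
    [AddCommGroup B] [Module R B] (f : A →ₗ[R] B) (x : ι → A) :
    f (rowMap r A x) = rowMap r B (fun i => f (x i)) := by
  simp [rowMap_apply]

/-- A submodule with flat quotient is pure with respect to a single row. -/
theorem IsFlatMod.exists_rowMap_eq [Fintype ι] {Q P F : Type} [AddCommGroup Q] [Module R Q]
    [AddCommGroup P] [Module R P] [AddCommGroup F] [Module R F] (hF : IsFlatMod R F)
    {d : Q →ₗ[R] P} {π : P →ₗ[R] F} (hπ : Function.Surjective π) (hd : Function.Exact d π)
    (r : ι → R) {q : Q} {p : ι → P} (h : d q = rowMap r P p) :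
    ∃ q' : ι → Q, d q = d (rowMap r Q q') := by
  obtain ⟨κ, _, a, y, hy, ha⟩ := hF ι ‹_› r (fun i => π (p i)) (by
    rw [← rowMap_apply, ← map_rowMap, ← h, hd.apply_apply_eq_zero])
  choose z hz using fun j => hπ (y j)
  have hker (i : ι) : π (p i - ∑ j, a i j • z j) = 0 := by simp [hz, hy i]
  choose q' hq' using fun i => (hd _).1 (hker i)
  refine ⟨q', ?_⟩
  have hzero : ∑ i, r i • ∑ j, a i j • z j = 0 := by
    simp only [Finset.smul_sum, ← mul_smul]
    rw [Finset.sum_comm]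
    simp [← Finset.sum_smul, ha]
  rw [map_rowMap, h]
  simp only [rowMap_apply, hq', smul_sub, Finset.sum_sub_distrib, hzero, sub_zero]

theorem cotorsion_annChar {ι : Type} [Fintype ι] (r : ι → R) :
    Cotorsion R (ModuleCat.of R (annChar r)) := by
  intro F hF
  let P := projectiveResolution F
  obtain ⟨π, hπ, hd⟩ := exists_augmentation P
  rw [extVanish_one_iff_s12 P]
  intro f hf
  let f' : P.complex.X 1 →ₗ[R] annChar r := f
  obtain ⟨χ, hχ⟩ := exists_character_factor
    ((QuotientAddGroup.mk' (rowMap r (P.complex.X 0)).range).comp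
      (P.complex.d 1 0).hom.toAddMonoidHom) (annCharEval r f') (by
    intro q hq
    obtain ⟨p, hp⟩ : P.complex.d 1 0 q ∈ (rowMap r (P.complex.X 0)).range :=
      (QuotientAddGroup.eq_zero_iff _).1 hq
    obtain ⟨q', hq'⟩ := hF.exists_rowMap_eq hπ hd r hp.symm
    obtain ⟨z, hz⟩ := resolution_exact_one P (q := q - rowMap r _ q') (by
      rw [map_sub]; exact sub_eq_zero.2 hq')
    have h0 : annCharEval r f' (q - rowMap r _ q') = 0 := by
      rw [← hz]
      exact congrArg (fun φ : annChar r => φ.1 1) (hf z)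
    rw [map_sub, rowMap_apply, map_sum] at h0
    simpa [annCharEval_smul] using h0)
  refine ⟨annCharLift r (χ.comp (QuotientAddGroup.mk' _)) fun i p => ?_, fun q => ?_⟩
  · rw [AddMonoidHom.comp_apply, QuotientAddGroup.mk'_apply,
      (QuotientAddGroup.eq_zero_iff _).2 (smul_mem_range_rowMap r i p), map_zero]
  · refine Subtype.ext (AddMonoidHom.ext fun t => ?_)
    have h1 := hχ (t • q)
    rw [annCharLift_apply, ← map_smul]
    refine h1.trans ?_
    change (f' (t • q)).1 1 = (f' q).1 t
    rw [map_smul, annChar_smul_apply, one_mul]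

theorem IsFlatMod.of_extVanish_annChar {M : ModuleCat.{0} R}
    (h : ∀ (ι : Type) [Fintype ι] (r : ι → R), extVanish R 1 M (ModuleCat.of R (annChar r))) :
    IsFlatMod R M := by
  intro ι _ r x hx
  let P := projectiveResolution M
  obtain ⟨π, hπ, hd⟩ := exists_augmentation P
  choose p hp using fun i => hπ (x i)
  obtain ⟨q, hq⟩ := (hd (rowMap r _ p)).1 (by rw [map_rowMap]; simpa [hp, rowMap_apply] using hx)
  let N : AddSubgroup (P.complex.X 1) :=
    (rowMap r (P.complex.X 1)).range ⊔ (P.complex.d 1 0).hom.toAddMonoidHom.ker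
  have hqN : q ∈ N := by
    by_contra hqN
    obtain ⟨c, hc⟩ := CharacterModule.exists_character_apply_ne_zero_of_ne_zero
      (a := (q : P.complex.X 1 ⧸ N)) (mt (QuotientAddGroup.eq_zero_iff q).1 hqN)
    let ψ : P.complex.X 1 →+ AddCircle (1 : ℚ) :=
      AddMonoidHom.comp (N := P.complex.X 1 ⧸ N) c (QuotientAddGroup.mk' N)
    have hψ {a : P.complex.X 1} (ha : a ∈ N) : ψ a = 0 := by
      change c ((a : P.complex.X 1 ⧸ N)) = 0
      rw [(QuotientAddGroup.eq_zero_iff a).2 ha, map_zero]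
    obtain ⟨g, hg⟩ := (extVanish_one_iff_s12 P _).1 (h ι r)
      (annCharLift r ψ fun i a => hψ (AddSubgroup.mem_sup_left (smul_mem_range_rowMap r i a)))
      (fun z => Subtype.ext (AddMonoidHom.ext fun t => by
        rw [annCharLift_apply, ← map_smul]
        exact hψ (AddSubgroup.mem_sup_right (resolution_d_d P (t • z)))))
    let g' : P.complex.X 0 →ₗ[R] annChar r := g
    have h1 : annCharEval r g' (P.complex.d 1 0 q) = ψ q :=
      (congrArg (fun φ : annChar r => φ.1 1) (hg q)).trans (by
        rw [annCharLift_apply, one_smul])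
    rw [hq, rowMap_apply, map_sum] at h1
    simp only [annCharEval_smul, Finset.sum_const_zero] at h1
    exact hc h1.symm
  obtain ⟨_, ⟨q', rfl⟩, k, hk, hqk⟩ := AddSubgroup.mem_sup.1 hqN
  have hPflat : IsFlatMod R (P.complex.X 0) := by
    have : Module.Projective R (P.complex.X 0) :=
      (IsProjective.iff_projective _).2 (P.projective 0)
    exact .of_projective _
  obtain ⟨κ, hκ, a, y, hy, ha⟩ := hPflat ι ‹_› r (fun i => p i - P.complex.d 1 0 (q' i)) (by
    have h2 : P.complex.d 1 0 k = 0 := hk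
    have h3 := map_rowMap r (P.complex.d 1 0).hom q'
    rw [← rowMap_apply]
    change rowMap r _ (p - fun i => P.complex.d 1 0 (q' i)) = 0
    rw [map_sub, sub_eq_zero, ← hq, ← hqk, map_add, h2, add_zero]
    exact h3)
  refine ⟨κ, hκ, a, fun j => π (y j), fun i => ?_, ha⟩
  have h4 := congrArg π (hy i)
  rw [map_sub, hd.apply_apply_eq_zero, sub_zero, hp] at h4
  simpa using h4

end Character

/-- Every cotorsion module is `L_n`-injective for some (equivalently, every) `n ≥ 1`
iff `l.FFD(R) = 0`, i.e. every module of finite flat dimension is flat. -/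
theorem stmt12 :
    ((∃ n : ℕ, 1 ≤ n ∧ ∀ C : ModuleCat.{0} R, Cotorsion R C → LnInj R n C) ↔
      (∀ M : ModuleCat.{0} R, (∃ k, fdLE R k M) → IsFlatMod R M)) ∧
    ((∀ n : ℕ, 1 ≤ n → ∀ C : ModuleCat.{0} R, Cotorsion R C → LnInj R n C) ↔
      (∀ M : ModuleCat.{0} R, (∃ k, fdLE R k M) → IsFlatMod R M)) := by
  have key {n : ℕ} (hn : 1 ≤ n) (h : ∀ C : ModuleCat.{0} R, Cotorsion R C → LnInj R n C) :
      ∀ M : ModuleCat.{0} R, (∃ k, fdLE R k M) → IsFlatMod R M := by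
    rintro M ⟨k, hM⟩
    refine isFlatMod_of_fdLE (fun N hN => ?_) k M hM
    exact .of_extVanish_annChar fun ι _ r => h _ (cotorsion_annChar r) N (fdLE_mono hn hN)
  have lnInj (h : ∀ M : ModuleCat.{0} R, (∃ k, fdLE R k M) → IsFlatMod R M) (n : ℕ)
      (C : ModuleCat.{0} R) (hC : Cotorsion R C) : LnInj R n C :=
    fun M hM => hC M (h M ⟨n, hM⟩)
  exact ⟨⟨fun ⟨_, hn, h⟩ => key hn h, fun h => ⟨1, le_rfl, lnInj h 1⟩⟩,
    ⟨fun h => key le_rfl (h 1 le_rfl), fun h n _ => lnInj h n⟩⟩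
end
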